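/- arXiv:1810.07369 — 2 statements merged into one kernel-verified Lean document; each statement's English description precedes it below -/
import Mathlib

section
/- Let f ∈ L¹(ℝ²) with ∫_{ℝ²} f dx = 0, and suppose there exist p₀ > 1 and β > 0 such that ∫_{ℝ²} |f(x)|^{p₀}(1+|x|)^{2βp₀ + 2(p₀-1)} dx < ∞. Then the Newtonian potential w(x) = -(1/2π)∫_{ℝ²} ln|x-y| f(y) dy is well-defined, continuous, and satisfies |w(x)| ≤ C |x|^{-2β/(1+2β)} ln|x| for all large |x|. -/
open MeasureTheory Real Filter
noncomputable section
abbrev E2 : Type := EuclideanSpace ℝ (Fin 2)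
/-- Classical Laplacian on ℝ². -/
def lap (u : E2 → ℝ) (x : E2) : ℝ :=
  ∑ i : Fin 2, fderiv ℝ (fun y => fderiv ℝ u y (EuclideanSpace.single i 1)) x (EuclideanSpace.single i 1)
/-- The set of admissible exponents α in the definition of α_p(K). -/
def alphaSet (K : E2 → ℝ) (p : ℝ) : Set ℝ :=
  {α : ℝ | Integrable (fun x : E2 => |K x| ^ p * (1 + ‖x‖) ^ (2*α*p + 2*(p-1)))}
/-- α_p(K), with the convention sup ∅ = -∞ (⊥ in `EReal`). -/
def alphaP (K : E2 → ℝ) (p : ℝ) : EReal :=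
  sSup ((fun a : ℝ => (a : EReal)) '' alphaSet K p)

def kap (q t : ℝ) : ℝ := if t < 1 then t ^ (-(1/q)) else 0
def lam (s t : ℝ) : ℝ := if 1 ≤ t then t ^ (-s) else 0

lemma kap_nonneg (q t : ℝ) (ht : 0 ≤ t) : 0 ≤ kap q t := by
  unfold kap; split_ifs <;> positivity
lemma lam_nonneg (q t : ℝ) : 0 ≤ lam q t := by
  unfold lam; split_ifs
  · exact rpow_nonneg (by linarith) _
  · exact le_rfl
lemma kap_meas (q : ℝ) : Measurable (kap q) :=
  Measurable.ite measurableSet_Iio (by fun_prop) (by fun_prop)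
lemma lam_meas (q : ℝ) : Measurable (lam q) :=
  Measurable.ite measurableSet_Ici (by fun_prop) (by fun_prop)

lemma memLp_radial (h : ℝ → ℝ) (hm : Measurable h) (hn : ∀ t, 0 ≤ t → 0 ≤ h t) (q : ℝ) (hq : 0 < q)
    (hi : IntegrableOn (fun t : ℝ => t * h t ^ q) (Set.Ioi 0)) :
    MemLp (fun z : E2 => h ‖z‖) (ENNReal.ofReal q) := by
  have hq0 : ENNReal.ofReal q ≠ 0 := by simpa using hq
  have hm' : Measurable (fun z : E2 => h ‖z‖) := hm.comp measurable_norm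
  rw [← integrable_norm_rpow_iff hm'.aestronglyMeasurable hq0 (by simp)]
  rw [ENNReal.toReal_ofReal hq.le]
  have : Integrable (fun z : E2 => (fun t => h t ^ q) ‖z‖) := by
    refine (integrable_fun_norm_addHaar (volume : Measure E2) (f := fun t => h t ^ q)).2 ?_
    simpa using hi
  refine this.congr (Eventually.of_forall fun z => ?_)
  simp [abs_of_nonneg (hn _ (norm_nonneg z))]

lemma kap_memLp (q : ℝ) (hq : 0 < q) :
    MemLp (fun z : E2 => kap q ‖z‖) (ENNReal.ofReal q) := by
  refine memLp_radial _ (kap_meas q) (fun t => kap_nonneg q t) q hq ?_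
  have h1 : IntegrableOn (fun t : ℝ => (1:ℝ)) (Set.Ioo (0:ℝ) 1) := by simp
  rw [← integrable_indicator_iff measurableSet_Ioi]
  rw [← integrable_indicator_iff measurableSet_Ioo] at h1
  refine h1.congr (Eventually.of_forall fun t => ?_)
  by_cases h0 : 0 < t <;> by_cases ht1 : t < 1 <;> simp [Set.indicator, h0, ht1, kap]
  · rw [← rpow_mul h0.le, show -q⁻¹ * q = -1 by field_simp, rpow_neg_one]
    field_simp
  · right; rw [zero_rpow hq.ne']

lemma lam_memLp (q s : ℝ) (hq : 0 < q) (hs : 2 < s * q) :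
    MemLp (fun z : E2 => lam s ‖z‖) (ENNReal.ofReal q) := by
  refine memLp_radial _ (lam_meas s) (fun t _ => lam_nonneg s t) q hq ?_
  have h1 : IntegrableOn (fun t : ℝ => t ^ (1 - s * q)) (Set.Ioi (1:ℝ)) :=
    integrableOn_Ioi_rpow_of_lt (by linarith) one_pos
  rw [← integrableOn_Ici_iff_integrableOn_Ioi] at h1
  rw [← integrable_indicator_iff measurableSet_Ioi]
  rw [← integrable_indicator_iff measurableSet_Ici] at h1
  refine h1.congr (Eventually.of_forall fun t => ?_)
  by_cases h0 : 1 ≤ t 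
  · have : 0 < t := by linarith
    simp [Set.indicator, h0, lam, this]
    rw [← rpow_mul this.le, sub_eq_add_neg, rpow_add this, rpow_one, neg_mul]
  · simp [Set.indicator, h0, lam, zero_rpow hq.ne']

lemma hold (h : ℝ → ℝ) (hm : Measurable h) (hn : ∀ t, 0 ≤ t → 0 ≤ h t) (p q : ℝ)
    (hpq : p.HolderConjugate q) (g : E2 → ℝ) (hg0 : ∀ y, 0 ≤ g y)
    (hg : MemLp g (ENNReal.ofReal p)) (hh : MemLp (fun z : E2 => h ‖z‖) (ENNReal.ofReal q)) :
    ∃ M : ℝ, 0 ≤ M ∧ ∀ r : ℝ, 0 < r → ∀ a : E2,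
      Integrable (fun y => h (r⁻¹ * ‖a - y‖) * g y) ∧
      ∫ y, h (r⁻¹ * ‖a - y‖) * g y ≤ M * r ^ (2/q) := by
  have hq := hpq.symm.pos
  have hp := hpq.pos
  have hq0 : ENNReal.ofReal q ≠ 0 := by simpa using hq
  refine ⟨(∫ z : E2, h ‖z‖ ^ q) ^ (1/q) * (∫ y, g y ^ p) ^ (1/p), ?_, ?_⟩
  · have : 0 ≤ ∫ z : E2, h ‖z‖ ^ q := integral_nonneg fun z => rpow_nonneg (hn _ (norm_nonneg _)) _
    have : 0 ≤ ∫ y, g y ^ p := integral_nonneg fun z => rpow_nonneg (hg0 _) _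
    positivity
  intro r hr a
  have hnn : ∀ y : E2, 0 ≤ h (r⁻¹ * ‖a - y‖) := fun y => hn _ (by positivity)
  have hmm : Measurable (fun y : E2 => h (r⁻¹ * ‖a - y‖)) := hm.comp (by fun_prop)
  have key : ∀ y : E2, r⁻¹ * ‖a - y‖ = ‖r⁻¹ • (a - y)‖ := fun y => by
    rw [norm_smul, Real.norm_of_nonneg (by positivity)]
  have hL : MemLp (fun y : E2 => h (r⁻¹ * ‖a - y‖)) (ENNReal.ofReal q) := by
    rw [← integrable_norm_rpow_iff hmm.aestronglyMeasurable hq0 (by simp)]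
    rw [← integrable_norm_rpow_iff hh.1 hq0 (by simp)] at hh
    simp_rw [key]
    exact (hh.comp_smul (inv_ne_zero hr.ne')).comp_sub_left a
  have hint : ∫ y : E2, h (r⁻¹ * ‖a - y‖) ^ q = r ^ 2 * ∫ z : E2, h ‖z‖ ^ q := by
    simp_rw [key]
    rw [integral_sub_left_eq_self (fun y : E2 => h ‖r⁻¹ • y‖ ^ q) volume a,
      Measure.integral_comp_inv_smul_of_nonneg volume (fun y : E2 => h ‖y‖ ^ q) hr.le]
    simp
  constructor
  · have := ENNReal.HolderConjugate.symm (p := ENNReal.ofReal p) (q := ENNReal.ofReal q) (hpq := hpq.ennrealOfReal)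
    exact MemLp.integrable_mul hL hg
  · refine (integral_mul_le_Lp_mul_Lq_of_nonneg hpq.symm (Eventually.of_forall hnn)
      (Eventually.of_forall hg0) hL hg).trans_eq ?_
    rw [hint, mul_rpow (by positivity) (integral_nonneg fun z => rpow_nonneg (hn _ (norm_nonneg _)) _)]
    have : ((r^2 : ℝ)) ^ (1/q) = r ^ (2/q) := by
      rw [← rpow_natCast, ← rpow_mul hr.le]; congr 1; push_cast; ring
    rw [this]; ring

/-- Log near zero is dominated by `kap`. -/
lemma log_le_kap (q t : ℝ) (hq : 0 < q) (h0 : 0 < t) (h1 : t < 1) : |log t| ≤ q * kap q t := by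
  have h := (abs_log_mul_self_rpow_lt t (1/q) h0 h1.le (by positivity)).le
  rw [abs_mul, abs_of_pos (rpow_pos_of_pos h0 (1/q)), one_div_one_div] at h
  simp only [kap, if_pos h1]
  rw [rpow_neg h0.le, ← div_eq_mul_inv, le_div_iff₀ (rpow_pos_of_pos h0 _)]
  exact h

/-- Global log bound. -/
lemma log_dist_le (β : ℝ) (hβ : 0 < β) (x y : E2) (h : 1 ≤ ‖x - y‖) :
    |log ‖x - y‖| ≤ ‖x‖ + (1 + ‖y‖) ^ β / β := by
  rw [abs_of_nonneg (log_nonneg h)]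
  have h1 : ‖x - y‖ ≤ (1 + ‖x‖) * (1 + ‖y‖) := by
    nlinarith [norm_sub_le x y, norm_nonneg x, norm_nonneg y, mul_nonneg (norm_nonneg x) (norm_nonneg y)]
  have h2 := log_le_log (by linarith) h1
  rw [log_mul (by positivity) (by positivity)] at h2
  have h3 : log (1 + ‖x‖) ≤ ‖x‖ := by
    have := log_le_sub_one_of_pos (show 0 < 1 + ‖x‖ by positivity); linarith
  have h4 := log_le_rpow_div (show 0 ≤ 1 + ‖y‖ by positivity) hβ
  linarith

lemma abs_log_le_of (s d : ℝ) (h1 : 1 - d ≤ s) (h2 : s ≤ 1 + d) (hd : d ≤ 1/2) : |log s| ≤ 2 * d := by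
  have hs : 0 < s := by linarith
  have hd0 : 0 ≤ d := by linarith
  rw [abs_le]
  have a := log_le_sub_one_of_pos hs
  have b := one_sub_inv_le_log_of_pos hs
  constructor
  · have : s⁻¹ ≤ 1 + 2 * d := by
      rw [inv_le_iff_one_le_mul₀ hs]; nlinarith
    linarith
  · linarith

/-- pointwise kernel bound -/
lemma ker_bound (q β s R : ℝ) (hq : 0 < q) (hβ : 0 < β) (hs : s = 2*β + 2/q) (x y : E2) (hR : 1 ≤ R)
    (hx : 2 * R ≤ ‖x‖) (hxy : x ≠ y) (F : ℝ) (hF : 0 ≤ F) :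
    |log ‖x - y‖ - log ‖x‖| * F ≤ 2 * R / ‖x‖ * F
      + q * (‖x‖/2) ^ (-s) * (kap q (‖x‖⁻¹ * ‖x - y‖) * (F * (1 + ‖y‖) ^ s))
      + (1 + 1/β) * R ^ (-s) * (lam (β + 2/q) (R⁻¹ * ‖0 - y‖) * (F * (1 + ‖y‖) ^ s)) := by
  have hx0 : 0 < ‖x‖ := by linarith
  have hR0 : 0 < R := by linarith
  have hd0 : 0 < ‖x - y‖ := norm_pos_iff.2 (sub_ne_zero.2 hxy)
  have hs0 : 0 < s := by rw [hs]; positivity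
  have t1 : 0 ≤ 2 * R / ‖x‖ * F := by positivity
  have t2 : 0 ≤ q * (‖x‖/2) ^ (-s) * (kap q (‖x‖⁻¹ * ‖x - y‖) * (F * (1 + ‖y‖) ^ s)) := by
    have := kap_nonneg q (‖x‖⁻¹ * ‖x - y‖) (by positivity)
    positivity
  have t3 : 0 ≤ (1 + 1/β) * R ^ (-s) * (lam (β + 2/q) (R⁻¹ * ‖0 - y‖) * (F * (1 + ‖y‖) ^ s)) := by
    have := lam_nonneg (β + 2/q) (R⁻¹ * ‖0 - y‖)
    positivity
  rw [← log_div hd0.ne' hx0.ne']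
  have tri1 := norm_sub_norm_le x y
  have tri2 := norm_sub_le x y
  rcases lt_or_ge ‖y‖ R with hy | hy
  · have : |log (‖x - y‖ / ‖x‖)| ≤ 2 * (R / ‖x‖) := by
      apply abs_log_le_of
      · rw [le_div_iff₀ hx0, sub_mul, div_mul_cancel₀ _ hx0.ne']; linarith
      · rw [div_le_iff₀ hx0, add_mul, div_mul_cancel₀ _ hx0.ne']; linarith
      · rw [div_le_iff₀ hx0]; linarith
    have := mul_le_mul_of_nonneg_right this hF
    have e : 2 * (R / ‖x‖) = 2 * R / ‖x‖ := by ring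
    rw [e] at this
    linarith
  rcases lt_or_ge ‖x - y‖ (‖x‖/2) with hc | hc
  · have h1 : ‖x - y‖ / ‖x‖ < 1 := by rw [div_lt_one hx0]; linarith
    have h2 := log_le_kap q _ hq (div_pos hd0 hx0) h1
    rw [show ‖x - y‖ / ‖x‖ = ‖x‖⁻¹ * ‖x - y‖ by ring] at h2 ⊢
    have hk := kap_nonneg q (‖x‖⁻¹ * ‖x - y‖) (by positivity)
    have h3 : 1 ≤ (‖x‖/2) ^ (-s) * (1 + ‖y‖) ^ s := by
      rw [rpow_neg (by positivity), inv_mul_eq_div, one_le_div (by positivity)]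
      exact rpow_le_rpow (by positivity) (by linarith) hs0.le
    have h4 : |log (‖x‖⁻¹ * ‖x - y‖)| * F ≤ q * kap q (‖x‖⁻¹ * ‖x - y‖) * F * ((‖x‖/2) ^ (-s) * (1 + ‖y‖) ^ s) :=
      (mul_le_mul_of_nonneg_right h2 hF).trans (le_mul_of_one_le_right (by positivity) h3)
    have e : q * kap q (‖x‖⁻¹ * ‖x - y‖) * F * ((‖x‖/2) ^ (-s) * (1 + ‖y‖) ^ s) =
      q * (‖x‖/2) ^ (-s) * (kap q (‖x‖⁻¹ * ‖x - y‖) * (F * (1 + ‖y‖) ^ s)) := by ring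
    rw [e] at h4
    linarith
  · have hy0 : 0 < ‖y‖ := by linarith
    set T := ‖y‖ / R with hT
    have hT1 : 1 ≤ T := by rw [hT, one_le_div hR0]; exact hy
    have hT0 : 0 < T := by linarith
    have u1 : 1/2 ≤ ‖x - y‖ / ‖x‖ := by rw [le_div_iff₀ hx0]; linarith
    have u2 : ‖x - y‖ / ‖x‖ ≤ 2 * T := by
      rw [div_le_iff₀ hx0]
      have : ‖y‖ = T * R := by rw [hT]; field_simp
      nlinarith
    have hl : |log (‖x - y‖ / ‖x‖)| ≤ 1 + T ^ β / β := by
      have a := log_le_rpow_div hT0.le hβ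
      have b := log_le_log (by positivity) u2
      rw [log_mul two_ne_zero hT0.ne'] at b
      have c := log_le_log (by norm_num) u1
      rw [one_div, log_inv] at c
      have d : log 2 ≤ 1 := by linarith [log_le_sub_one_of_pos (show (0:ℝ) < 2 by norm_num)]
      have e : 0 ≤ T ^ β / β := by positivity
      rw [abs_le]; constructor <;> linarith
    have hl2 : |log (‖x - y‖ / ‖x‖)| ≤ (1 + 1/β) * T ^ β := by
      have : 1 ≤ T ^ β := one_le_rpow hT1 hβ.le
      have e : (1 + 1/β) * T ^ β = T^β + T^β / β := by ring
      rw [e]; linarith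
    have e1 : R⁻¹ * ‖0 - y‖ = T := by rw [zero_sub, norm_neg, hT]; ring
    have h3 : T ^ β ≤ R ^ (-s) * lam (β + 2/q) T * (1 + ‖y‖) ^ s := by
      simp only [lam, if_pos hT1]
      have : T ^ β = R ^ (-s) * T ^ (-(β + 2/q)) * ‖y‖ ^ s := by
        have : ‖y‖ = R * T := by rw [hT]; field_simp
        rw [this, mul_rpow hR0.le hT0.le]
        have a : R ^ (-s) * R ^ s = 1 := by rw [← rpow_add hR0]; simp
        have b : T ^ (-(β + 2/q)) * T ^ s = T ^ β := by
          rw [← rpow_add hT0, hs]; congr 1; ring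
        rw [← b]
        linear_combination (-(T ^ (-(β + 2/q)) * T ^ s)) * a
      rw [this]
      have : ‖y‖ ^ s ≤ (1 + ‖y‖) ^ s := rpow_le_rpow hy0.le (by linarith) hs0.le
      gcongr
    rw [e1] at t3 ⊢
    have h4 : |log (‖x - y‖ / ‖x‖)| * F ≤ (1 + 1/β) * (R ^ (-s) * lam (β + 2/q) T * (1 + ‖y‖) ^ s) * F := by
      refine mul_le_mul_of_nonneg_right (hl2.trans ?_) hF
      gcongr
    have e : (1 + 1/β) * (R ^ (-s) * lam (β + 2/q) T * (1 + ‖y‖) ^ s) * F =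
      (1 + 1/β) * R ^ (-s) * (lam (β + 2/q) T * (F * (1 + ‖y‖) ^ s)) := by ring
    rw [e] at h4
    linarith

/-- moment bound -/
lemma mom_bound (q β s : ℝ) (hq : 0 < q) (hβ : 0 < β) (hs : s = 2*β + 2/q) (y : E2) (F : ℝ) (hF : 0 ≤ F) :
    (1 + ‖y‖) ^ β * F ≤ 2 ^ β * (F + lam (β + 2/q) (1⁻¹ * ‖0 - y‖) * (F * (1 + ‖y‖) ^ s)) := by
  have e1 : (1:ℝ)⁻¹ * ‖0 - y‖ = ‖y‖ := by simp
  rw [e1]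
  have hs0 : 0 < s := by rw [hs]; positivity
  have hl := lam_nonneg (β + 2/q) ‖y‖
  rcases lt_or_ge ‖y‖ 1 with hy | hy
  · have h1 : (1 + ‖y‖) ^ β ≤ 2 ^ β := rpow_le_rpow (by positivity) (by linarith) hβ.le
    have : 0 ≤ lam (β + 2/q) ‖y‖ * (F * (1 + ‖y‖) ^ s) := by positivity
    calc _ ≤ 2 ^ β * F := by gcongr
      _ ≤ _ := by gcongr; linarith
  · have hy0 : 0 < ‖y‖ := by linarith
    have h1 : (1 + ‖y‖) ^ β ≤ 2 ^ β * ‖y‖ ^ β := by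
      rw [← mul_rpow (by norm_num) hy0.le]
      exact rpow_le_rpow (by positivity) (by linarith) hβ.le
    have h2 : ‖y‖ ^ β ≤ lam (β + 2/q) ‖y‖ * (1 + ‖y‖) ^ s := by
      simp only [lam, if_pos hy]
      have b : ‖y‖ ^ (-(β + 2/q)) * ‖y‖ ^ s = ‖y‖ ^ β := by
        rw [← rpow_add hy0, hs]; congr 1; ring
      rw [← b]
      have : ‖y‖ ^ s ≤ (1 + ‖y‖) ^ s := rpow_le_rpow hy0.le (by linarith) hs0.le
      gcongr
    calc _ ≤ (2 ^ β * ‖y‖ ^ β) * F := by gcongr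
      _ ≤ (2 ^ β * (lam (β + 2/q) ‖y‖ * (1 + ‖y‖) ^ s)) * F := by gcongr
      _ = 2 ^ β * (0 + lam (β + 2/q) ‖y‖ * (F * (1 + ‖y‖) ^ s)) := by ring
      _ ≤ _ := by gcongr


theorem stmt6 (f : E2 → ℝ) (hmeas : Measurable f) (hf : Integrable f)
    (hzero : ∫ x, f x = 0) (p₀ β : ℝ) (hp₀ : 1 < p₀) (hβ : 0 < β)
    (hwt : Integrable (fun x : E2 => |f x| ^ p₀ * (1 + ‖x‖) ^ (2*β*p₀ + 2*(p₀-1)))) :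
    (∀ x : E2, Integrable (fun y : E2 => log ‖x - y‖ * f y)) ∧
    Continuous (fun x : E2 => -(1/(2*π)) * ∫ y : E2, log ‖x - y‖ * f y) ∧
    ∃ C R : ℝ, 0 < C ∧ ∀ x : E2, R ≤ ‖x‖ →
      |-(1/(2*π)) * ∫ y : E2, log ‖x - y‖ * f y| ≤
        C * ‖x‖ ^ (-(2*β/(1+2*β))) * log ‖x‖ := by
  obtain ⟨q, hq⟩ : ∃ q, q = p₀.conjExponent := ⟨_, rfl⟩
  have hpq : p₀.HolderConjugate q := hq ▸ Real.HolderConjugate.conjExponent hp₀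
  have hp0 := hpq.pos
  have hq0 := hpq.symm.pos
  obtain ⟨s, hs⟩ : ∃ s, s = 2*β + 2/q := ⟨_, rfl⟩
  have hs0 : 0 < s := by rw [hs]; positivity
  have hsp : s * p₀ = 2*β*p₀ + 2*(p₀-1) := by
    have h1 : p₀ / q = p₀ - 1 := by
      have := hpq.inv_add_inv_eq_one
      have h2 : q⁻¹ = 1 - p₀⁻¹ := by linarith
      rw [div_eq_mul_inv, h2]; field_simp
    rw [hs, ← h1]; ring
  have hg0 : ∀ y : E2, 0 ≤ |f y| * (1 + ‖y‖) ^ s := fun y => by positivity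
  have hg : MemLp (fun y : E2 => |f y| * (1 + ‖y‖) ^ s) (ENNReal.ofReal p₀) := by
    have hm : Measurable (fun y : E2 => |f y| * (1 + ‖y‖) ^ s) :=
      (by simpa using hmeas.norm : Measurable fun y => |f y|).mul (by fun_prop)
    rw [← integrable_norm_rpow_iff hm.aestronglyMeasurable (by simpa using hp0) (by simp)]
    refine hwt.congr (Eventually.of_forall fun y => ?_)
    simp only [ENNReal.toReal_ofReal hp0.le]
    rw [Real.norm_of_nonneg (hg0 y), mul_rpow (by positivity) (by positivity),
      ← rpow_mul (by positivity), hsp]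
  obtain ⟨M1, hM1, H1⟩ := hold _ (kap_meas q) (kap_nonneg q) p₀ q hpq _ hg0 hg (kap_memLp q hq0)
  obtain ⟨M2, hM2, H2⟩ := hold _ (lam_meas (β + 2/q)) (fun t _ => lam_nonneg (β + 2/q) t) p₀ q hpq _ hg0 hg
    (lam_memLp q (β + 2/q) hq0 (by
      have : (β + 2/q) * q = β * q + 2 := by field_simp
      rw [this]; nlinarith [mul_pos hβ hq0]))
  have hgf : ∀ y : E2, |f y| ≤ |f y| * (1 + ‖y‖) ^ s := fun y =>
    le_mul_of_one_le_right (abs_nonneg _) (one_le_rpow (by linarith [norm_nonneg y]) hs0.le)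
  have hmom : Integrable (fun y : E2 => (1 + ‖y‖) ^ β * |f y|) := by
    refine Integrable.mono' ((hf.abs.add (H2 1 one_pos 0).1).const_mul (2 ^ β)) ?_ ?_
    · exact ((by fun_prop : Measurable fun y : E2 => (1 + ‖y‖) ^ β).mul
        (by simpa using hmeas.norm : Measurable fun y => |f y|)).aestronglyMeasurable
    · refine Eventually.of_forall fun y => ?_
      rw [Real.norm_of_nonneg (by positivity)]
      exact mom_bound q β s hq0 hβ hs y _ (abs_nonneg _)
  have hlm : ∀ x : E2, Measurable (fun y : E2 => log ‖x - y‖ * f y) := fun x =>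
    (measurable_log.comp (by fun_prop)).mul hmeas
  have hI : ∀ x : E2, Integrable (fun y : E2 => log ‖x - y‖ * f y) := by
    intro x
    refine Integrable.mono' (((H1 1 one_pos x).1.const_mul q).add
      ((hf.abs.const_mul ‖x‖).add (hmom.const_mul (1/β)))) (hlm x).aestronglyMeasurable ?_
    filter_upwards [Measure.ae_ne volume x] with y hy
    have hd0 : 0 < ‖x - y‖ := norm_pos_iff.2 (sub_ne_zero.2 hy.symm)
    have hk := kap_nonneg q (1⁻¹ * ‖x - y‖) (by positivity)
    rw [norm_mul, Real.norm_eq_abs, Real.norm_eq_abs]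
    simp only [Pi.add_apply]
    rcases lt_or_ge ‖x - y‖ 1 with h | h
    · have h1 := log_le_kap q _ hq0 hd0 h
      have h2 : 0 ≤ ‖x‖ * |f y| + 1/β * ((1 + ‖y‖) ^ β * |f y|) := by positivity
      have h3 : |log ‖x - y‖| * |f y| ≤ q * kap q ‖x - y‖ * (|f y| * (1 + ‖y‖) ^ s) :=
        mul_le_mul h1 (hgf y) (abs_nonneg _) ((abs_nonneg _).trans h1)
      rw [inv_one, one_mul]
      linarith
    · have h1 := mul_le_mul_of_nonneg_right (log_dist_le β hβ x y h) (abs_nonneg (f y))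
      have h2 : 0 ≤ q * (kap q (1⁻¹ * ‖x - y‖) * (|f y| * (1 + ‖y‖) ^ s)) := by positivity
      have e : (‖x‖ + (1 + ‖y‖) ^ β / β) * |f y| = ‖x‖ * |f y| + 1/β * ((1 + ‖y‖) ^ β * |f y|) := by ring
      linarith
  refine ⟨hI, ?_, ?_⟩
  · refine Continuous.mul continuous_const ?_
    -- truncated kernels
    have hbd : ∀ ε : ℝ, 0 < ε → ε ≤ 1 → ∀ B : ℝ, ∀ x : E2, ‖x‖ ≤ B → ∀ y : E2,
        ‖log (max ‖x - y‖ ε) * f y‖ ≤ (|log ε| + B) * |f y| + 1/β * ((1 + ‖y‖) ^ β * |f y|) := by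
      intro ε hε hε1 B x hx y
      have hB : 0 ≤ B := (norm_nonneg x).trans hx
      have hr : 0 ≤ (1 + ‖y‖) ^ β / β := by positivity
      have h1 : |log (max ‖x - y‖ ε)| ≤ |log ε| + B + (1 + ‖y‖) ^ β / β := by
        rcases lt_or_ge ‖x - y‖ 1 with h | h
        · have a := log_le_log hε (le_max_right ‖x - y‖ ε)
          have b := log_nonpos (x := max ‖x - y‖ ε) (by positivity) (max_le h.le hε1)
          rw [abs_of_nonpos b, abs_of_nonpos (a.trans b)]
          linarith
        · rw [max_eq_left (hε1.trans h)]
          have := log_dist_le β hβ x y h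
          linarith [abs_nonneg (log ε)]
      rw [norm_mul, Real.norm_eq_abs, Real.norm_eq_abs]
      have h2 := mul_le_mul_of_nonneg_right h1 (abs_nonneg (f y))
      have e : (|log ε| + B + (1 + ‖y‖) ^ β / β) * |f y| =
        (|log ε| + B) * |f y| + 1/β * ((1 + ‖y‖) ^ β * |f y|) := by ring
      linarith
    have hbi : ∀ ε B : ℝ, Integrable (fun y : E2 => (|log ε| + B) * |f y| + 1/β * ((1 + ‖y‖) ^ β * |f y|)) :=
      fun ε B => (hf.abs.const_mul _).add (hmom.const_mul _)
    have htm : ∀ ε : ℝ, ∀ x : E2, AEStronglyMeasurable (fun y : E2 => log (max ‖x - y‖ ε) * f y) := fun ε x =>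
      ((measurable_log.comp (by fun_prop)).mul hmeas).aestronglyMeasurable
    have hti : ∀ ε : ℝ, 0 < ε → ε ≤ 1 → ∀ x : E2, Integrable (fun y : E2 => log (max ‖x - y‖ ε) * f y) :=
      fun ε hε hε1 x => Integrable.mono' (hbi ε ‖x‖) (htm ε x)
        (Eventually.of_forall fun y => hbd ε hε hε1 _ x le_rfl y)
    have hcont : ∀ ε : ℝ, 0 < ε → ε ≤ 1 → Continuous (fun x : E2 => ∫ y : E2, log (max ‖x - y‖ ε) * f y) := by
      intro ε hε hε1
      rw [continuous_iff_continuousAt]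
      intro x₀
      refine continuousAt_of_dominated (Eventually.of_forall fun x => htm ε x) ?_ (hbi ε (‖x₀‖ + 1)) ?_
      · filter_upwards [Metric.ball_mem_nhds x₀ one_pos] with x hx
        refine Eventually.of_forall fun y => hbd ε hε hε1 _ x ?_ y
        rw [mem_ball_iff_norm] at hx
        have := norm_sub_norm_le x x₀
        linarith
      · refine Eventually.of_forall fun y => ?_
        refine ContinuousAt.mul (ContinuousAt.log (by fun_prop) ?_) continuousAt_const
        exact (lt_of_lt_of_le hε (le_max_right _ _)).ne'
    have hdiff : ∀ ε : ℝ, 0 < ε → ε ≤ 1 → ∀ x : E2,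
        |(∫ y : E2, log ‖x - y‖ * f y) - ∫ y : E2, log (max ‖x - y‖ ε) * f y| ≤ q * (M1 * ε ^ (2/q)) := by
      intro ε hε hε1 x
      rw [← integral_sub (hI x) (hti ε hε hε1 x), ← Real.norm_eq_abs]
      refine (norm_integral_le_of_norm_le ((H1 ε hε x).1.const_mul q) ?_).trans ?_
      · filter_upwards [Measure.ae_ne volume x] with y hy
        have hd0 : 0 < ‖x - y‖ := norm_pos_iff.2 (sub_ne_zero.2 hy.symm)
        have hk := kap_nonneg q (ε⁻¹ * ‖x - y‖) (by positivity)
        rw [← sub_mul, norm_mul, Real.norm_eq_abs, Real.norm_eq_abs]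
        rcases lt_or_ge ‖x - y‖ ε with h | h
        · rw [max_eq_right h.le, ← log_div hd0.ne' hε.ne']
          have h1 := log_le_kap q (‖x - y‖ / ε) hq0 (by positivity) (by rwa [div_lt_one hε])
          rw [show ‖x - y‖ / ε = ε⁻¹ * ‖x - y‖ by ring] at h1 ⊢
          have h3 := mul_le_mul h1 (hgf y) (abs_nonneg _) ((abs_nonneg _).trans h1)
          linarith
        · rw [max_eq_left h, sub_self, abs_zero, zero_mul]
          positivity
      · rw [integral_const_mul]
        exact mul_le_mul_of_nonneg_left (H1 ε hε x).2 hq0.le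
    refine continuous_of_uniform_approx_of_continuous fun u hu => ?_
    obtain ⟨δ, hδ, hu⟩ := Metric.mem_uniformity_dist.1 hu
    have hlim : Tendsto (fun ε : ℝ => q * (M1 * ε ^ (2/q))) (nhdsWithin 0 (Set.Ioi 0)) (nhds 0) := by
      have h2 : 0 < 2/q := by positivity
      have : ContinuousAt (fun ε : ℝ => q * (M1 * ε ^ (2/q))) 0 :=
        continuousAt_const.mul (continuousAt_const.mul (continuousAt_rpow_const _ _ (Or.inr h2.le)))
      have h3 := this.tendsto
      simp only [zero_rpow h2.ne', mul_zero] at h3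
      exact h3.mono_left nhdsWithin_le_nhds
    obtain ⟨ε, hε, hε0, hε1⟩ := ((hlim.eventually (gt_mem_nhds hδ)).and
      (Ioc_mem_nhdsGT (zero_lt_one' ℝ))).exists
    refine ⟨_, hcont ε hε0 hε1, fun x => hu ?_⟩
    rw [Real.dist_eq]
    exact (hdiff ε hε0 hε1 x).trans_lt hε
  · set N := ∫ y, |f y| with hN
    have hN0 : 0 ≤ N := integral_nonneg fun y => abs_nonneg _
    obtain ⟨C, hC⟩ : ∃ C, C = 2 * N + q * 2 ^ s * M1 + (1 + 1/β) * M2 + 1 := ⟨_, rfl⟩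
    have hC0 : 0 < C := by rw [hC]; positivity
    refine ⟨1/(2*π) * C, max 3 (2 ^ ((1+2*β)/(2*β))), by positivity, fun x hx => ?_⟩
    have hx3 : 3 ≤ ‖x‖ := (le_max_left _ _).trans hx
    have hx2 := (le_max_right _ _).trans hx
    have hx0 : 0 < ‖x‖ := by linarith
    set R := ‖x‖ ^ (1/(1+2*β)) with hR
    set Q := ‖x‖ ^ (-(2*β/(1+2*β))) with hQ
    have hQ0 : 0 < Q := by positivity
    have hR0 : 0 < R := by positivity
    have hR1 : 1 ≤ R := one_le_rpow (by linarith) (by positivity)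
    have hRx : R / ‖x‖ = Q := by
      rw [hR, hQ, div_eq_mul_inv, ← rpow_neg_one ‖x‖, ← rpow_add hx0]
      congr 1; field_simp; ring
    have hQ2 : Q ≤ 1/2 := by
      have h1 : (2:ℝ) ≤ ‖x‖ ^ (2*β/(1+2*β)) := by
        have := rpow_le_rpow (by positivity) hx2 (show 0 ≤ 2*β/(1+2*β) by positivity)
        rw [← rpow_mul (by norm_num), show (1+2*β)/(2*β) * (2*β/(1+2*β)) = 1 by field_simp, rpow_one] at this
        exact this
      rw [hQ, rpow_neg hx0.le, one_div]
      exact inv_anti₀ (by norm_num) h1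
    have h2R : 2 * R ≤ ‖x‖ := by
      rw [← hRx, div_le_iff₀ hx0] at hQ2; linarith
    have hRQ : R ^ (-(2*β)) = Q := by
      rw [hR, hQ, ← rpow_mul hx0.le]; congr 1; field_simp
    have hxQ : ‖x‖ ^ (-(2*β)) ≤ Q := by
      rw [hQ]
      apply rpow_le_rpow_of_exponent_le (by linarith)
      rw [neg_le_neg_iff]
      exact div_le_self (by positivity) (by linarith)
    have hlog : 1 ≤ log ‖x‖ := by
      rw [le_log_iff_exp_le hx0]
      linarith [exp_one_lt_d9]
    have hint : ∫ y : E2, log ‖x - y‖ * f y = ∫ y : E2, (log ‖x - y‖ - log ‖x‖) * f y := by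
      simp_rw [sub_mul]
      rw [integral_sub (hI x) (hf.const_mul _), integral_const_mul, hzero]; simp
    have i1 := hf.abs.const_mul (2 * R / ‖x‖)
    have i2 := (H1 ‖x‖ hx0 x).1.const_mul (q * (‖x‖/2) ^ (-s))
    have i3 := (H2 R hR0 0).1.const_mul ((1 + 1/β) * R ^ (-s))
    have main : |∫ y : E2, log ‖x - y‖ * f y| ≤ C * Q := by
      rw [hint, ← Real.norm_eq_abs]
      refine (norm_integral_le_of_norm_le ((i1.add i2).add i3) ?_).trans ?_
      · filter_upwards [Measure.ae_ne volume x] with y hy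
        rw [norm_mul, Real.norm_eq_abs, Real.norm_eq_abs]
        exact ker_bound q β s R hq0 hβ hs x y hR1 h2R hy.symm _ (abs_nonneg _)
      · rw [integral_add' (i1.add i2) i3, integral_add' i1 i2, integral_const_mul, integral_const_mul,
          integral_const_mul]
        have a1 : 2 * R / ‖x‖ * ∫ y, |f y| = 2 * N * Q := by
          rw [← hN, ← hRx]; ring
        have a2 : q * (‖x‖/2) ^ (-s) * ∫ y, kap q (‖x‖⁻¹ * ‖x - y‖) * (|f y| * (1 + ‖y‖) ^ s) ≤
            q * 2 ^ s * M1 * Q := by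
          refine (mul_le_mul_of_nonneg_left (H1 ‖x‖ hx0 x).2 (by positivity)).trans ?_
          have e1 : (‖x‖/2) ^ (-s) * ‖x‖ ^ (2/q) = 2 ^ s * ‖x‖ ^ (-(2*β)) := by
            rw [div_rpow hx0.le (by norm_num), rpow_neg (by norm_num : (0:ℝ) ≤ 2), div_inv_eq_mul,
              mul_right_comm, ← rpow_add hx0, mul_comm, hs]
            congr 2; ring
          calc _ = q * M1 * ((‖x‖/2) ^ (-s) * ‖x‖ ^ (2/q)) := by ring
            _ = q * M1 * (2 ^ s * ‖x‖ ^ (-(2*β))) := by rw [e1]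
            _ ≤ q * M1 * (2 ^ s * Q) := by gcongr
            _ = _ := by ring
        have a3 : (1 + 1/β) * R ^ (-s) * ∫ y, lam (β + 2/q) (R⁻¹ * ‖0 - y‖) * (|f y| * (1 + ‖y‖) ^ s) ≤
            (1 + 1/β) * M2 * Q := by
          refine (mul_le_mul_of_nonneg_left (H2 R hR0 0).2 (by positivity)).trans ?_
          have e1 : R ^ (-s) * R ^ (2/q) = Q := by
            rw [← rpow_add hR0, ← hRQ, hs]; congr 1; ring
          apply le_of_eq
          rw [← e1]; ring
        rw [a1, hC]
        linarith
    rw [abs_mul, abs_neg, abs_of_pos (by positivity : 0 < 1/(2*π))]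
    calc _ ≤ 1/(2*π) * (C * Q) := by gcongr
      _ = 1/(2*π) * C * Q * 1 := by ring
      _ ≤ _ := by gcongr
end
end

section
/- Let K ≤ 0 be locally bounded with α_1(K) > 0, let α ∈ (0, α_1(K)), and let u be a continuous solution of Δu + K e^{2u} = 0 in ℝ² with u(x) = α ln|x| + O(1) at infinity. Then the total curvature satisfies ∫_{ℝ²} K e^{2u} dx = -2απ. -/
open MeasureTheory Real Filter
noncomputable section
/-- cutoff existence -/
theorem cut_exists : ∃ ψ : ℝ → ℝ, ContDiff ℝ 3 ψ ∧ (∀ s, s ≤ 1 → ψ s = 1) ∧ (∀ s, 2 ≤ s → ψ s = 0) ∧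
    (∀ s, |ψ s| ≤ 1) ∧ (∀ s, s < 1 → deriv (deriv ψ) s = 0) ∧ (∀ s, 2 < s → deriv (deriv ψ) s = 0) ∧
    ∃ M, ∀ s, |deriv (deriv ψ) s| ≤ M := by
  let ψ : ℝ → ℝ := fun s => Real.smoothTransition (2 - s)
  have hc : ContDiff ℝ 3 ψ := by
    have : ContDiff ℝ 3 Real.smoothTransition := Real.smoothTransition.contDiff (n := 3)
    exact this.comp (contDiff_const.sub contDiff_id)
  have h1 : ∀ s, s ≤ 1 → ψ s = 1 := fun s hs => Real.smoothTransition.one_of_one_le (by linarith)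
  have h2 : ∀ s, 2 ≤ s → ψ s = 0 := fun s hs => Real.smoothTransition.zero_of_nonpos (by linarith)
  have key : ∀ (U : Set ℝ) (c : ℝ), IsOpen U → (∀ s ∈ U, ψ s = c) → ∀ s ∈ U, deriv (deriv ψ) s = 0 := by
    intro U c hU h s hs
    have e1 : ψ =ᶠ[nhds s] fun _ => c := by
      filter_upwards [hU.mem_nhds hs] with t ht using h t ht
    have e2 := e1.deriv.deriv_eq
    rw [e2]; simp
  have h3 : ∀ s, s < 1 → deriv (deriv ψ) s = 0 := key (Set.Iio 1) 1 isOpen_Iio (fun s hs => h1 s (le_of_lt hs))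
  have h4 : ∀ s, 2 < s → deriv (deriv ψ) s = 0 := key (Set.Ioi 2) 0 isOpen_Ioi (fun s hs => h2 s (le_of_lt hs))
  refine ⟨ψ, hc, h1, h2, ?_, h3, h4, ?_⟩
  · intro s
    rw [abs_of_nonneg (Real.smoothTransition.nonneg _)]
    exact Real.smoothTransition.le_one _
  · have hcs : HasCompactSupport (deriv (deriv ψ)) := by
      apply HasCompactSupport.intro (isCompact_Icc (a := (1:ℝ)) (b := 2))
      intro x hx
      rcases lt_or_ge x 1 with h | h
      · exact h3 x h
      · apply h4; by_contra h'; exact hx ⟨h, not_lt.1 h'⟩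
    have hcont : Continuous (deriv (deriv ψ)) := by
      have := ContDiff.iterate_deriv' 1 2 (f := ψ) (by exact_mod_cast hc)
      exact this.continuous
    exact hcs.exists_bound_of_continuous hcont

/-- partial -/
theorem phi_partial (ψ : ℝ → ℝ) (hψ : Differentiable ℝ ψ) (L : ℝ) (hL : 0 < L) (x : E2) (hx : x ≠ 0) (i : Fin 2) :
    HasFDerivAt (fun y : E2 => ψ (log (‖y‖^2) / (2*L)))
      ((deriv ψ (log (‖x‖^2) / (2*L)) / (L * ‖x‖^2)) • innerSL ℝ x) x := by
  have hn : ‖x‖^2 ≠ 0 := by positivity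
  have h1 : HasFDerivAt (fun y : E2 => ‖y‖^2) (2 • (innerSL ℝ) x) x := (hasStrictFDerivAt_norm_sq x).hasFDerivAt
  have h2 := (h1.log hn).mul_const (2*L)⁻¹
  have h3 := (hψ (log (‖x‖^2) * (2*L)⁻¹)).hasDerivAt.comp_hasFDerivAt x h2
  simp only [div_eq_mul_inv]
  refine h3.congr_fderiv ?_
  ext v
  simp
  field_simp

theorem phi_contDiff (ψ : ℝ → ℝ) (hψ : ContDiff ℝ 3 ψ) (h1 : ∀ s, s ≤ 1 → ψ s = 1) (L : ℝ) (hL : 0 < L) :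
    ContDiff ℝ 2 (fun y : E2 => ψ (log (‖y‖^2) / (2*L))) := by
  rw [contDiff_iff_contDiffAt]
  intro x
  by_cases hx : ‖x‖ < 1
  · have : (fun y : E2 => ψ (log (‖y‖^2) / (2*L))) =ᶠ[nhds x] fun _ => 1 := by
      filter_upwards [(isOpen_lt continuous_norm continuous_const).mem_nhds hx] with y hy
      apply h1
      have hy' : ‖y‖ < 1 := hy
      have : log (‖y‖^2) ≤ 0 := Real.log_nonpos (by positivity) (by nlinarith [norm_nonneg y])
      have : log (‖y‖^2) / (2*L) ≤ 0 := div_nonpos_of_nonpos_of_nonneg this (by positivity)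
      linarith
    exact contDiffAt_const.congr_of_eventuallyEq this
  · have hn : ‖x‖^2 ≠ 0 := by
      have : 0 < ‖x‖ := by linarith
      positivity
    have : ContDiffAt ℝ 2 (fun y : E2 => log (‖y‖^2) / (2*L)) x :=
      ((contDiff_norm_sq ℝ).contDiffAt.log hn).div_const _
    exact (hψ.of_le (by norm_num)).contDiffAt.comp x this

theorem lap_phi (ψ : ℝ → ℝ) (hψ : ContDiff ℝ 3 ψ) (h1 : ∀ s, s ≤ 1 → ψ s = 1) (L : ℝ) (hL : 0 < L) (x : E2) :
    lap (fun y : E2 => ψ (log (‖y‖^2) / (2*L))) x = deriv (deriv ψ) (log ‖x‖ / L) / (L^2 * ‖x‖^2) := by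
  have hd : Differentiable ℝ ψ := hψ.differentiable (by norm_num)
  have hd' : Differentiable ℝ (deriv ψ) := by
    have := ContDiff.iterate_deriv' 2 1 (f := ψ) (by exact_mod_cast hψ)
    exact this.differentiable (by norm_num)
  by_cases hx : x = 0
  · subst hx
    have : (fun y : E2 => ψ (log (‖y‖^2) / (2*L))) =ᶠ[nhds 0] fun _ => 1 := by
      filter_upwards [Metric.ball_mem_nhds (0:E2) one_pos] with y hy
      apply h1
      have hy' : ‖y‖ < 1 := by simpa using hy
      have : log (‖y‖^2) ≤ 0 := Real.log_nonpos (by positivity) (by nlinarith [norm_nonneg y])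
      have : log (‖y‖^2) / (2*L) ≤ 0 := div_nonpos_of_nonpos_of_nonneg this (by positivity)
      linarith
    unfold lap
    simp only [norm_zero]
    have e : ∀ i : Fin 2, (fun y => fderiv ℝ (fun y : E2 => ψ (log (‖y‖^2) / (2*L))) y (EuclideanSpace.single i 1)) =ᶠ[nhds 0] fun _ => 0 := by
      intro i
      filter_upwards [this.fderiv (𝕜 := ℝ)] with y hy
      rw [hy]
      have : fderiv ℝ (fun _ : E2 => (1:ℝ)) y = 0 := by simp
      rw [this]; rfl
    have e' : ∀ i : Fin 2, fderiv ℝ (fun y => fderiv ℝ (fun y : E2 => ψ (log (‖y‖^2) / (2*L))) y (EuclideanSpace.single i 1)) 0 (EuclideanSpace.single i 1) = 0 := by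
      intro i
      have := (e i).fderiv_eq (𝕜 := ℝ)
      rw [this]; simp
    rw [Finset.sum_eq_zero (fun i _ => e' i)]
    simp
  · have hn : ‖x‖^2 ≠ 0 := by positivity
    have e : ∀ i : Fin 2, (fun y => fderiv ℝ (fun y : E2 => ψ (log (‖y‖^2) / (2*L))) y (EuclideanSpace.single i 1))
        =ᶠ[nhds x] fun y => deriv ψ (log (‖y‖^2) / (2*L)) * (L * ‖y‖^2)⁻¹ * (innerSL ℝ (EuclideanSpace.single i 1) y) := by
      intro i
      filter_upwards [isOpen_ne.mem_nhds hx] with y hy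
      rw [(phi_partial ψ hd L hL y hy i).fderiv]
      simp [div_eq_mul_inv, real_inner_comm]
    unfold lap
    have key : ∀ i : Fin 2, fderiv ℝ (fun y => fderiv ℝ (fun y : E2 => ψ (log (‖y‖^2) / (2*L))) y (EuclideanSpace.single i 1)) x (EuclideanSpace.single i 1)
        = deriv (deriv ψ) (log (‖x‖^2) / (2*L)) / (L * ‖x‖^2)^2 * (x i)^2
          + deriv ψ (log (‖x‖^2) / (2*L)) / (L * ‖x‖^2) * (1 - 2 * (x i)^2 / ‖x‖^2) := by
      intro i
      rw [(e i).fderiv_eq]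
      have g1 := phi_partial (deriv ψ) hd' L hL x hx i
      have g2 : HasFDerivAt (fun y : E2 => L * ‖y‖^2) (L • (2 • (innerSL ℝ) x)) x :=
        (hasStrictFDerivAt_norm_sq x).hasFDerivAt.const_mul L
      have g3 := (hasDerivAt_inv (x := L * ‖x‖^2) (by positivity)).comp_hasFDerivAt x g2
      have g4 := (innerSL ℝ (EuclideanSpace.single i (1:ℝ))).hasFDerivAt (x := x)
      have g5 := (g1.mul g3).mul g4
      have := g5.fderiv
      simp only [Function.comp_def] at this
      erw [this]
      simp [EuclideanSpace.inner_single_left, EuclideanSpace.inner_single_right]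
      field_simp
      ring
    simp only [key, Fin.sum_univ_two]
    have hs : log (‖x‖^2) / (2*L) = log ‖x‖ / L := by
      rw [Real.log_pow]; push_cast; field_simp
    rw [hs]
    have hq := EuclideanSpace.real_norm_sq_eq x
    rw [Fin.sum_univ_two] at hq
    have hx0 : (x 0)^2 = ‖x‖^2 - (x 1)^2 := by rw [hq]; ring
    rw [hx0]
    have : ‖x‖ ≠ 0 := by positivity
    field_simp
    ring

theorem ibp (u φ : E2 → ℝ) (hu : ContDiff ℝ 2 u) (hφ : ContDiff ℝ 2 φ) (hc : HasCompactSupport φ) :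
    ∫ x, lap u x * φ x = ∫ x, u x * lap φ x := by
  have hd : ∀ (w : E2 → ℝ), ContDiff ℝ 2 w → ∀ v : E2, ContDiff ℝ 1 (fun y => fderiv ℝ w y v) := by
    intro w hw v
    exact (hw.fderiv_right (m := 1) (by norm_num)).clm_apply contDiff_const
  have hdd : ∀ (w : E2 → ℝ), ContDiff ℝ 2 w → ∀ v : E2, Continuous (fun x => fderiv ℝ (fun y => fderiv ℝ w y v) x v) := by
    intro w hw v
    exact ((hd w hw v).continuous_fderiv (by norm_num)).clm_apply continuous_const
  have hc1 : ∀ v : E2, HasCompactSupport (fun y => fderiv ℝ φ y v) := fun v => hc.fderiv_apply ℝ v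
  have hc2 : ∀ v : E2, HasCompactSupport (fun x => fderiv ℝ (fun y => fderiv ℝ φ y v) x v) :=
    fun v => (hc1 v).fderiv_apply ℝ v
  have iA : ∀ v : E2, Integrable (fun x => fderiv ℝ (fun y => fderiv ℝ u y v) x v * φ x) := fun v =>
    ((hdd u hu v).mul hφ.continuous).integrable_of_hasCompactSupport hc.mul_left
  have iB : ∀ v : E2, Integrable (fun x => fderiv ℝ u x v * fderiv ℝ φ x v) := fun v =>
    ((hd u hu v).continuous.mul (hd φ hφ v).continuous).integrable_of_hasCompactSupport (hc1 v).mul_left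
  have iC : ∀ v : E2, Integrable (fun x => u x * fderiv ℝ (fun y => fderiv ℝ φ y v) x v) := fun v =>
    (hu.continuous.mul (hdd φ hφ v)).integrable_of_hasCompactSupport (hc2 v).mul_left
  have iD : ∀ v : E2, Integrable (fun x => u x * fderiv ℝ φ x v) := fun v =>
    (hu.continuous.mul (hd φ hφ v).continuous).integrable_of_hasCompactSupport (hc1 v).mul_left
  have iE : ∀ v : E2, Integrable (fun x => fderiv ℝ u x v * φ x) := fun v =>
    ((hd u hu v).continuous.mul hφ.continuous).integrable_of_hasCompactSupport hc.mul_left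
  have key : ∀ v : E2, ∫ x, fderiv ℝ (fun y => fderiv ℝ u y v) x v * φ x
      = ∫ x, u x * fderiv ℝ (fun y => fderiv ℝ φ y v) x v := by
    intro v
    have a := integral_mul_fderiv_eq_neg_fderiv_mul_of_integrable (iA v) (iB v) (iE v)
      (fun x _ => (hd u hu v).differentiable (by norm_num) x) (fun x _ => hφ.differentiable (by norm_num) x)
    have b := integral_mul_fderiv_eq_neg_fderiv_mul_of_integrable (iB v) (iC v) (iD v)
      (fun x _ => hu.differentiable (by norm_num) x) (fun x _ => (hd φ hφ v).differentiable (by norm_num) x)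
    linarith
  simp only [lap, Fin.sum_univ_two, add_mul, mul_add]
  rw [integral_add (iA _) (iA _), integral_add (iC _) (iC _), key, key]

theorem radial (f : ℝ → ℝ) : ∫ x : E2, f ‖x‖ = 2 * π * ∫ r in Set.Ioi (0:ℝ), r * f r := by
  rw [integral_fun_norm_addHaar volume f]
  simp [Measure.real, EuclideanSpace.volume_ball_fin_two, Real.pi_pos.le]
  ring

theorem int_K (K : E2 → ℝ) (hmeas : Measurable K) 
    (α : ℝ) (hα : 0 < α)
    (hα1 : ∃ β : ℝ, α < β ∧ Integrable (fun x : E2 => |K x| * (1 + ‖x‖) ^ (2*β)))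
    (u : E2 → ℝ) (hu : Continuous u)
    (hb : ∃ C : ℝ, ∀ x : E2, 1 ≤ ‖x‖ → |u x - α * log ‖x‖| ≤ C) :
    Integrable (fun x : E2 => K x * exp (2 * u x)) := by
  obtain ⟨β, hβ, hi⟩ := hα1
  obtain ⟨C, hC⟩ := hb
  obtain ⟨B, hB⟩ := (isCompact_closedBall (0:E2) 1).exists_bound_of_continuousOn hu.continuousOn
  refine (hi.const_mul (exp (2 * max B C))).mono' (by fun_prop) ?_
  refine Eventually.of_forall fun x => ?_
  rw [norm_mul, Real.norm_eq_abs, Real.norm_eq_abs, abs_of_pos (exp_pos _)]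
  have hone : 1 ≤ (1 + ‖x‖) ^ (2*β) := Real.one_le_rpow (by linarith [norm_nonneg x]) (by linarith)
  have : exp (2 * u x) ≤ exp (2 * max B C) * (1 + ‖x‖) ^ (2*β) := by
    rcases le_total ‖x‖ 1 with h | h
    · have h1 := hB x (by simpa using h)
      have h2 := (le_abs_self _).trans h1
      have : exp (2 * u x) ≤ exp (2 * max B C) := exp_le_exp.2 (by linarith [le_max_left B C])
      exact this.trans (le_mul_of_one_le_right (exp_pos _).le hone)
    · have h1 := (le_abs_self _).trans (hC x h)
      have hp : 0 < 1 + ‖x‖ := by linarith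
      rw [Real.rpow_def_of_pos hp, ← exp_add]
      apply exp_le_exp.2
      have h3 : log ‖x‖ ≤ log (1 + ‖x‖) := Real.log_le_log (by linarith) (by linarith)
      have h4 : 0 ≤ log ‖x‖ := Real.log_nonneg h
      have h5 : α * log ‖x‖ ≤ β * log (1 + ‖x‖) := mul_le_mul hβ.le h3 h4 (by linarith)
      linarith [le_max_right B C]
  calc |K x| * exp (2 * u x) ≤ |K x| * (exp (2 * max B C) * (1 + ‖x‖) ^ (2*β)) := by gcongr
    _ = _ := by ring

theorem oneD (ψ : ℝ → ℝ) (hψ : ContDiff ℝ 3 ψ) (h1 : ∀ s, s ≤ 1 → ψ s = 1) (h2 : ∀ s, 2 ≤ s → ψ s = 0)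
    (h3 : ∀ s, s < 1 → deriv (deriv ψ) s = 0) (h4 : ∀ s, 2 < s → deriv (deriv ψ) s = 0)
    (L : ℝ) (hL : 0 < L) :
    ∫ r in Set.Ioi (0:ℝ), r * (log r * (deriv (deriv ψ) (log r / L) / (L^2 * r^2))) = 1 := by
  have hd : Differentiable ℝ ψ := hψ.differentiable (by norm_num)
  have hd' : Differentiable ℝ (deriv ψ) := by
    have := ContDiff.iterate_deriv' 2 1 (f := ψ) (by exact_mod_cast hψ)
    exact this.differentiable (by norm_num)
  have hcont : Continuous (deriv (deriv ψ)) := by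
    have := ContDiff.iterate_deriv' 1 2 (f := ψ) (by exact_mod_cast hψ)
    exact this.continuous
  have hle : (1:ℝ) ≤ exp (3*L) := Real.one_le_exp (by positivity)
  have e : ∫ r in Set.Ioi (0:ℝ), r * (log r * (deriv (deriv ψ) (log r / L) / (L^2 * r^2)))
      = ∫ r in Set.Ioc (1:ℝ) (exp (3*L)), r * (log r * (deriv (deriv ψ) (log r / L) / (L^2 * r^2))) := by
    apply setIntegral_eq_of_subset_of_forall_sdiff_eq_zero measurableSet_Ioi
    · intro r hr; exact lt_trans one_pos hr.1
    · rintro r ⟨hr0, hr⟩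
      have hr0 : 0 < r := hr0
      have : deriv (deriv ψ) (log r / L) = 0 := by
        rcases le_or_gt r 1 with h | h
        · apply h3
          have : log r / L ≤ 0 := div_nonpos_of_nonpos_of_nonneg (Real.log_nonpos hr0.le h) hL.le
          linarith
        · apply h4
          have : exp (3*L) < r := by by_contra h'; exact hr ⟨h, not_lt.1 h'⟩
          have := (Real.lt_log_iff_exp_lt hr0).2 this
          rw [lt_div_iff₀ hL]; linarith
      simp [this]
  rw [e, ← intervalIntegral.integral_of_le hle]
  have hpos : ∀ r ∈ Set.uIcc 1 (exp (3*L)), 0 < r := by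
    intro r hr; rw [Set.uIcc_of_le hle] at hr; linarith [hr.1]
  rw [intervalIntegral.integral_eq_sub_of_hasDerivAt
    (f := fun r => log r / L * deriv ψ (log r / L) - ψ (log r / L))]
  · have hlog : log (exp (3*L)) / L = 3 := by rw [Real.log_exp]; field_simp
    have d3 : deriv ψ 3 = 0 := by
      have : ψ =ᶠ[nhds 3] fun _ => 0 := by
        filter_upwards [isOpen_Ioi.mem_nhds (show (3:ℝ) ∈ Set.Ioi 2 by norm_num)] with t ht using h2 t (le_of_lt ht)
      rw [this.deriv_eq]; simp
    simp only [hlog, d3, Real.log_one, zero_div, h2 3 (by norm_num), h1 0 (by norm_num)]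
    norm_num
  · intro r hr
    have hr := hpos r hr
    have g := (Real.hasDerivAt_log hr.ne').div_const L
    have ga := (hd' (log r / L)).hasDerivAt.comp r g
    have gb := (hd (log r / L)).hasDerivAt.comp r g
    refine ((g.mul ga).sub gb).congr_deriv ?_
    simp
    field_simp
    ring
  · apply ContinuousOn.intervalIntegrable
    have hlc : ContinuousOn log (Set.uIcc 1 (exp (3*L))) := Real.continuousOn_log.mono (fun r hr => (hpos r hr).ne')
    refine continuousOn_id.mul (hlc.mul ((hcont.comp_continuousOn (hlc.div_const L)).div (by fun_prop) ?_))
    intro r hr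
    have := hpos r hr
    positivity

theorem oneD_err (g : ℝ → ℝ) (M : ℝ) (hg : Continuous g) (hM : ∀ s, |g s| ≤ M) 
    (h3 : ∀ s, s < 1 → g s = 0) (h4 : ∀ s, 2 < s → g s = 0)
    (L : ℝ) (hL : 0 < L) :
    ∫ r in Set.Ioi (0:ℝ), r * |g (log r / L) / (L^2 * r^2)| ≤ 3 * M / L := by
  have hle : (1:ℝ) ≤ exp (3*L) := Real.one_le_exp (by positivity)
  have e : ∫ r in Set.Ioi (0:ℝ), r * |g (log r / L) / (L^2 * r^2)|
      = ∫ r in Set.Ioc (1:ℝ) (exp (3*L)), r * |g (log r / L) / (L^2 * r^2)| := by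
    apply setIntegral_eq_of_subset_of_forall_sdiff_eq_zero measurableSet_Ioi
    · intro r hr; exact lt_trans one_pos hr.1
    · rintro r ⟨hr0, hr⟩
      have hr0 : 0 < r := hr0
      have : g (log r / L) = 0 := by
        rcases le_or_gt r 1 with h | h
        · apply h3
          have : log r / L ≤ 0 := div_nonpos_of_nonpos_of_nonneg (Real.log_nonpos hr0.le h) hL.le
          linarith
        · apply h4
          have : exp (3*L) < r := by by_contra h'; exact hr ⟨h, not_lt.1 h'⟩
          have := (Real.lt_log_iff_exp_lt hr0).2 this
          rw [lt_div_iff₀ hL]; linarith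
      simp [this]
  rw [e, ← intervalIntegral.integral_of_le hle]
  have hpos : ∀ r ∈ Set.uIcc 1 (exp (3*L)), 0 < r := by
    intro r hr; rw [Set.uIcc_of_le hle] at hr; linarith [hr.1]
  have hlc : ContinuousOn log (Set.uIcc 1 (exp (3*L))) := Real.continuousOn_log.mono (fun r hr => (hpos r hr).ne')
  have hI : ∫ r in (1:ℝ)..(exp (3*L)), M / L^2 * (1 / r) = 3 * M / L := by
    rw [intervalIntegral.integral_const_mul, integral_one_div_of_pos one_pos (exp_pos _)]
    simp; field_simp
  rw [← hI]
  apply intervalIntegral.integral_mono_on hle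
  · apply ContinuousOn.intervalIntegrable
    refine continuousOn_id.mul (((hg.comp_continuousOn (hlc.div_const L)).div (by fun_prop) ?_).abs)
    intro r hr
    have := hpos r hr
    positivity
  · apply ContinuousOn.intervalIntegrable
    refine continuousOn_const.mul (continuousOn_const.div continuousOn_id fun r hr => (hpos r hr).ne')
  · intro r hr
    have hr : 0 < r := by linarith [hr.1]
    rw [abs_div, abs_of_pos (show 0 < L^2 * r^2 by positivity)]
    calc r * (|g (log r / L)| / (L^2 * r^2)) ≤ r * (M / (L^2 * r^2)) := by gcongr; exact hM _
      _ = _ := by field_simp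

theorem lap_continuous (φ : E2 → ℝ) (hφ : ContDiff ℝ 2 φ) : Continuous (lap φ) := by
  have hd : ∀ v : E2, ContDiff ℝ 1 (fun y => fderiv ℝ φ y v) := fun v =>
    (hφ.fderiv_right (m := 1) (by norm_num)).clm_apply contDiff_const
  unfold lap
  exact continuous_finset_sum _ fun i _ => (((hd _).continuous_fderiv (by norm_num)).clm_apply continuous_const)

theorem lap_compact (φ : E2 → ℝ) (hc : HasCompactSupport φ) : HasCompactSupport (lap φ) := by
  have h := fun v : E2 => ((hc.fderiv_apply ℝ v).fderiv_apply ℝ v)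
  have := (h (EuclideanSpace.single 0 1)).add (h (EuclideanSpace.single 1 1))
  have e : lap φ = (fun x => fderiv ℝ (fun y => fderiv ℝ φ y (EuclideanSpace.single 0 1)) x (EuclideanSpace.single 0 1))
     + (fun x => fderiv ℝ (fun y => fderiv ℝ φ y (EuclideanSpace.single 1 1)) x (EuclideanSpace.single 1 1)) := by
    ext x; simp [lap, Fin.sum_univ_two]
  rw [e]; exact this

theorem est (ψ : ℝ → ℝ) (hψ : ContDiff ℝ 3 ψ) (h1 : ∀ s, s ≤ 1 → ψ s = 1) (h2 : ∀ s, 2 ≤ s → ψ s = 0)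
    (h3 : ∀ s, s < 1 → deriv (deriv ψ) s = 0) (h4 : ∀ s, 2 < s → deriv (deriv ψ) s = 0)
    (M : ℝ) (hM : ∀ s, |deriv (deriv ψ) s| ≤ M)
    (L : ℝ) (hL : 0 < L) (α : ℝ) (u : E2 → ℝ) (hu : ContDiff ℝ 2 u)
    (C : ℝ) (hC0 : 0 ≤ C) (hC : ∀ x : E2, 1 ≤ ‖x‖ → |u x - α * log ‖x‖| ≤ C) :
    |(∫ x, lap u x * ψ (log (‖x‖^2) / (2*L))) - 2 * π * α| ≤ C * (2 * π * (3 * M / L)) := by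
  set φ : E2 → ℝ := fun y : E2 => ψ (log (‖y‖^2) / (2*L)) with hφdef
  have hφ : ContDiff ℝ 2 φ := phi_contDiff ψ hψ h1 L hL
  have hc : HasCompactSupport φ := by
    apply HasCompactSupport.intro (isCompact_closedBall (0:E2) (exp (2*L)))
    intro x hx
    have hx : exp (2*L) < ‖x‖ := by simpa using hx
    apply h2
    have hp : 0 < ‖x‖ := (exp_pos _).trans hx
    have := (Real.lt_log_iff_exp_lt hp).2 hx
    rw [Real.log_pow, le_div_iff₀ (by positivity)]
    push_cast; linarith
  have hlap : ∀ x, lap φ x = deriv (deriv ψ) (log ‖x‖ / L) / (L^2 * ‖x‖^2) := lap_phi ψ hψ h1 L hL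
  have hcont : Continuous (deriv (deriv ψ)) := by
    have := ContDiff.iterate_deriv' 1 2 (f := ψ) (by exact_mod_cast hψ)
    exact this.continuous
  have hlc := lap_continuous φ hφ
  have hlcs := lap_compact φ hc
  have hint : Integrable (lap φ) := hlc.integrable_of_hasCompactSupport hlcs
  have hintu : Integrable (fun x => u x * lap φ x) :=
    (hu.continuous.mul hlc).integrable_of_hasCompactSupport hlcs.mul_left
  have hlogI : ∫ x : E2, log ‖x‖ * lap φ x = 2 * π := by
    simp only [hlap]
    rw [radial (fun r => log r * (deriv (deriv ψ) (log r / L) / (L^2 * r^2))), oneD ψ hψ h1 h2 h3 h4 L hL]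
    ring
  have hlogint : Integrable (fun x : E2 => log ‖x‖ * lap φ x) := by
    by_contra h
    rw [integral_undef h] at hlogI
    linarith [Real.pi_pos]
  have habs : ∫ x : E2, |lap φ x| ≤ 2 * π * (3 * M / L) := by
    simp only [hlap]
    rw [radial (fun r => |deriv (deriv ψ) (log r / L) / (L^2 * r^2)|)]
    have := oneD_err _ M hcont hM h3 h4 L hL
    have hp := Real.pi_pos
    gcongr
  have hsub : (∫ x, lap u x * φ x) - 2 * π * α = ∫ x, (u x * lap φ x - α * (log ‖x‖ * lap φ x)) := by
    rw [integral_sub hintu (hlogint.const_mul α), integral_const_mul, hlogI, ibp u φ hu hφ hc]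
    ring
  change |(∫ x, lap u x * φ x) - 2 * π * α| ≤ _
  rw [hsub, ← Real.norm_eq_abs]
  calc _ ≤ ∫ x : E2, C * |lap φ x| := by
        apply norm_integral_le_of_norm_le (hint.abs.const_mul C)
        refine Eventually.of_forall fun x => ?_
        rw [show u x * lap φ x - α * (log ‖x‖ * lap φ x) = (u x - α * log ‖x‖) * lap φ x by ring,
          Real.norm_eq_abs, abs_mul]
        rcases le_or_gt 1 ‖x‖ with h | h
        · gcongr; exact hC x h
        · have : lap φ x = 0 := by
            rw [hlap, h3, zero_div]
            have : log ‖x‖ / L ≤ 0 :=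
              div_nonpos_of_nonpos_of_nonneg (Real.log_nonpos (norm_nonneg x) h.le) hL.le
            linarith
          simp [this]
    _ = C * ∫ x : E2, |lap φ x| := integral_const_mul _ _
    _ ≤ _ := by gcongr

theorem stmt18 (K : E2 → ℝ) (hmeas : Measurable K) (hK : ∀ x, K x ≤ 0)
    (hloc : ∀ R : ℝ, ∃ M : ℝ, ∀ x : E2, ‖x‖ ≤ R → |K x| ≤ M)
    (α : ℝ) (hα : 0 < α)
    (hα1 : ∃ β : ℝ, α < β ∧ Integrable (fun x : E2 => |K x| * (1 + ‖x‖) ^ (2*β)))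
    (u : E2 → ℝ) (hu : ContDiff ℝ 2 u)
    (heq : ∀ x, lap u x + K x * exp (2 * u x) = 0)
    (hb : ∃ C : ℝ, ∀ x : E2, 1 ≤ ‖x‖ → |u x - α * log ‖x‖| ≤ C) :
    ∫ x : E2, K x * exp (2 * u x) = -(2*α*π) := by
  have hint := int_K K hmeas α hα hα1 u hu.continuous hb
  obtain ⟨C, hC⟩ := hb
  obtain ⟨ψ, hψ, h1, h2, hle, h3, h4, M, hM⟩ := cut_exists
  have hC0 : 0 ≤ C := by
    have := hC (EuclideanSpace.single 0 1) (by simp)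
    exact (abs_nonneg _).trans this
  have hlapu : ∀ x, lap u x = -(K x * exp (2 * u x)) := fun x => by linarith [heq x]
  have hintl : Integrable (lap u) := by
    have : lap u = fun x => -(K x * exp (2 * u x)) := funext hlapu
    rw [this]; exact hint.neg
  have t1 : Tendsto (fun n : ℕ => ∫ x, lap u x * ψ (log (‖x‖^2) / (2*((n:ℝ)+1)))) atTop
      (nhds (∫ x, lap u x)) := by
    apply tendsto_integral_of_dominated_convergence (fun x => |lap u x|)
    · intro n
      exact ((lap_continuous u hu).mul
        (phi_contDiff ψ hψ h1 ((n:ℝ)+1) (by positivity)).continuous).aestronglyMeasurable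
    · exact hintl.abs
    · intro n
      refine Eventually.of_forall fun x => ?_
      rw [Real.norm_eq_abs, abs_mul]
      exact mul_le_of_le_one_right (abs_nonneg _) (hle _)
    · refine Eventually.of_forall fun x => ?_
      apply tendsto_const_nhds.congr'
      filter_upwards [eventually_ge_atTop ⌈log (‖x‖^2)⌉₊] with n hn
      have hn' : log (‖x‖^2) ≤ n := Nat.ceil_le.1 hn
      rw [h1, mul_one]
      rw [div_le_one (by positivity)]
      have : (0:ℝ) ≤ n := n.cast_nonneg
      linarith
  have t2 : Tendsto (fun n : ℕ => ∫ x, lap u x * ψ (log (‖x‖^2) / (2*((n:ℝ)+1)))) atTop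
      (nhds (2 * π * α)) := by
    rw [tendsto_iff_norm_sub_tendsto_zero]
    have t3 : Tendsto (fun n : ℕ => C * (2 * π * (3 * M)) * (1 / ((n:ℝ)+1))) atTop (nhds 0) := by
      simpa using tendsto_one_div_add_atTop_nhds_zero_nat.const_mul (C * (2 * π * (3 * M)))
    refine squeeze_zero (fun n => norm_nonneg _) (fun n => ?_) t3
    rw [Real.norm_eq_abs]
    refine (est ψ hψ h1 h2 h3 h4 M hM ((n:ℝ)+1) (by positivity) α u hu C hC0 hC).trans (le_of_eq ?_)
    ring
  have h := tendsto_nhds_unique t1 t2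
  simp only [hlapu] at h
  rw [integral_neg] at h
  linarith
end
end
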